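/- Let ⟨ω₁, …, ω_{n+2}⟩ be an (n+2)-web of hypersurfaces on U whose (n+1)-th form is exact: ω_{n+1} = df for a smooth function f : U → ℝ with nonvanishing differential. Then there exists a unique torsion-free affine connection Γ on U such that the web is geodesic for Γ and f is affine for Γ, i.e. d^s_Γ(df) = 0. -/

import Mathlib

open scoped BigOperators

/-- Partial derivative in the `i`-th coordinate direction. -/
noncomputable def pd {n : ℕ} (i : Fin n) (f : (Fin n → ℝ) → ℝ) (x : Fin n → ℝ) : ℝ :=
  fderiv ℝ f x (Pi.single i 1)

/-- A torsion-free affine connection on `U`, given by its Christoffel symbols `Γ k i j`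
(smooth on `U` and symmetric in the lower indices `i j`). -/
def IsTorsionFreeConn {n : ℕ} (U : Set (Fin n → ℝ))
    (Γ : Fin n → Fin n → Fin n → (Fin n → ℝ) → ℝ) : Prop :=
  (∀ k i j, ContDiffOn ℝ (⊤ : ℕ∞) (Γ k i j) U) ∧ (∀ k i j x, Γ k i j x = Γ k j i x)

/-- `γ` is a geodesic of `Γ` on the set `I ⊆ ℝ`, with image in `U`. -/
def IsGeodesicOn {n : ℕ} (U : Set (Fin n → ℝ))
    (Γ : Fin n → Fin n → Fin n → (Fin n → ℝ) → ℝ)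
    (I : Set ℝ) (γ : ℝ → Fin n → ℝ) : Prop :=
  (∀ t ∈ I, γ t ∈ U) ∧ ContDiffOn ℝ 2 γ I ∧
    ∀ t ∈ I, ∀ k, deriv (fun s => deriv (fun u => γ u k) s) t +
      ∑ i, ∑ j, Γ k i j (γ t) * deriv (fun u => γ u i) t * deriv (fun u => γ u j) t = 0

/-- The codimension-one foliation defined by the `1`-form `ω` is totally geodesic for `Γ`:
every geodesic tangent to a leaf at time `0` stays tangent to the kernel of `ω`. -/
def TotallyGeodesic {n : ℕ} (U : Set (Fin n → ℝ))
    (Γ : Fin n → Fin n → Fin n → (Fin n → ℝ) → ℝ)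
    (ω : (Fin n → ℝ) → Fin n → ℝ) : Prop :=
  ∀ I : Set ℝ, IsOpen I → I.OrdConnected → (0 : ℝ) ∈ I →
    ∀ γ : ℝ → Fin n → ℝ, IsGeodesicOn U Γ I γ →
      (∑ k, ω (γ 0) k * deriv (fun u => γ u k) 0) = 0 →
      ∀ t ∈ I, (∑ k, ω (γ t) k * deriv (fun u => γ u k) t) = 0

/-- `ω` is a smooth nonvanishing `1`-form on `U` satisfying the integrability
condition `ω ∧ dω = 0`. -/
def IsFoliationForm {n : ℕ} (U : Set (Fin n → ℝ)) (ω : (Fin n → ℝ) → Fin n → ℝ) : Prop :=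
  ContDiffOn ℝ (⊤ : ℕ∞) ω U ∧ (∀ x ∈ U, ω x ≠ 0) ∧
    ∀ x ∈ U, ∀ i j k,
      ω x i * (pd j (fun y => ω y k) x - pd k (fun y => ω y j) x) +
      ω x j * (pd k (fun y => ω y i) x - pd i (fun y => ω y k) x) +
      ω x k * (pd i (fun y => ω y j) x - pd j (fun y => ω y i) x) = 0

/-- Components of the symmetric covariant differential `d^s_Γ ω`. -/
noncomputable def dsym {n : ℕ} (Γ : Fin n → Fin n → Fin n → (Fin n → ℝ) → ℝ)
    (ω : (Fin n → ℝ) → Fin n → ℝ) (i j : Fin n) (x : Fin n → ℝ) : ℝ :=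
  (pd i (fun y => ω y j) x + pd j (fun y => ω y i) x) / 2 - ∑ k, Γ k i j x * ω x k

/-- Components of the symmetric product `θ·ω` of two `1`-forms. -/
noncomputable def symProd {n : ℕ} (θ ω : (Fin n → ℝ) → Fin n → ℝ) (i j : Fin n) (x : Fin n → ℝ) : ℝ :=
  (θ x i * ω x j + θ x j * ω x i) / 2

/-- A `d`-web of hypersurfaces on `U`: a family of smooth nonvanishing integrable `1`-forms,
any `n` of which are linearly independent at every point of `U`. -/
def IsWeb {n d : ℕ} (U : Set (Fin n → ℝ)) (ωs : Fin d → (Fin n → ℝ) → Fin n → ℝ) : Prop :=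
  (∀ i, IsFoliationForm U (ωs i)) ∧
    ∀ x ∈ U, ∀ σ : Fin n → Fin d, Function.Injective σ →
      LinearIndependent ℝ (fun i => ωs (σ i) x)

/-- `Γ` and `Γ'` are projectively equivalent on `U`:
`Γ'ᵏᵢⱼ = Γᵏᵢⱼ + δᵏᵢ ρⱼ + δᵏⱼ ρᵢ` for some smooth `1`-form `ρ`. -/
def ProjEquiv {n : ℕ} (U : Set (Fin n → ℝ))
    (Γ Γ' : Fin n → Fin n → Fin n → (Fin n → ℝ) → ℝ) : Prop :=
  ∃ ρ : (Fin n → ℝ) → Fin n → ℝ, ContDiffOn ℝ (⊤ : ℕ∞) ρ U ∧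
    ∀ x ∈ U, ∀ k i j, Γ' k i j x =
      Γ k i j x + (if k = i then ρ x j else 0) + (if k = j then ρ x i else 0)

/-- `X` is the frame of vector fields dual to the coframe `ωs` on `U`. -/
def IsDualFrame {n : ℕ} (U : Set (Fin n → ℝ)) (ωs : Fin n → (Fin n → ℝ) → Fin n → ℝ)
    (X : Fin n → (Fin n → ℝ) → Fin n → ℝ) : Prop :=
  (∀ i, ContDiffOn ℝ (⊤ : ℕ∞) (X i) U) ∧
    ∀ x ∈ U, ∀ i j, (∑ k, ωs i x k * X j x k) = if i = j then 1 else 0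

/-- The web invariants `s^a_{ij} = (1/(aᵢ−aⱼ))·(aᵢ ∂ⱼ − aⱼ ∂ᵢ) log (aⱼ/aᵢ)`, where `∂ᵢ`
is derivation along the frame vector field `X i`. -/
noncomputable def sInv {n : ℕ} (X : Fin n → (Fin n → ℝ) → Fin n → ℝ)
    (a : Fin n → (Fin n → ℝ) → ℝ) (i j : Fin n) (x : Fin n → ℝ) : ℝ :=
  (1 / (a i x - a j x)) *
    (a i x * (fderiv ℝ (a j) x (X j x) / a j x - fderiv ℝ (a i) x (X j x) / a i x) -
     a j x * (fderiv ℝ (a j) x (X i x) / a j x - fderiv ℝ (a i) x (X i x) / a i x))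

/-- The curvature tensor `Rᵏₗᵢⱼ` of the connection `Γ`. -/
noncomputable def curv {n : ℕ} (Γ : Fin n → Fin n → Fin n → (Fin n → ℝ) → ℝ)
    (k l i j : Fin n) (x : Fin n → ℝ) : ℝ :=
  pd i (Γ k j l) x - pd j (Γ k i l) x +
    ∑ m, (Γ k i m x * Γ m j l x - Γ k j m x * Γ m i l x)

/-!
In a suitable scaling of its forms the web is `⟨w₁, …, wₙ, ∑ wₘ, ∑ bₘ wₘ⟩`, where `w` is a coframe,
`∑ wₘ` is the distinguished form, and general position makes the `bₘ` nonzero and pairwise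
distinct. A foliation `ω = 0` is totally geodesic if and only if `d^s_Γ ω = θ·ω` for some `1`-form
`θ`, because the derivative of `ω(γ̇)` along a geodesic is `d^s_Γ ω (γ̇, γ̇)`. The conditions on `Γ`
therefore read
`d^s_Γ wₘ = θₘ·wₘ`, `∑ θₘ·wₘ = 0` and `∑ (bₘ θₘ + dbₘ - bₘ μ)·wₘ = 0`.
On the frame `X` dual to `w`, with `Tᵢⱼ = θᵢ(Xⱼ)`, they say that `T` is antisymmetric and that
`bᵢ Tᵢⱼ + bⱼ Tⱼᵢ = bᵢ μ(Xⱼ) + bⱼ μ(Xᵢ) - dbᵢ(Xⱼ) - dbⱼ(Xᵢ)`. The diagonal equations give `μ`, the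
others give `T`, and the solution is the web invariant `sᵢⱼ` of `b`. Finally, a torsion-free
connection is the same thing as an arbitrary choice of `d^s_Γ` on the members of a coframe.
-/

open Matrix

section GeneralPosition

variable {K V : Type*} [Field K] [AddCommGroup V] [Module K V]

lemma exists_dual_of_forall_ker_apply_self_eq_zero [NeZero (2 : K)] {B : LinearMap.BilinForm K V}
    (hB : B.IsSymm) {φ : Module.Dual K V} (h : ∀ v, φ v = 0 → B v v = 0) :
    ∃ θ : Module.Dual K V, ∀ u v, B u v = (θ u * φ v + θ v * φ u) / 2 := by
  -- So `v - φ v • y` lies in the kernel of `φ`, even if `φ = 0`.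
  obtain ⟨y, hy⟩ : ∃ y, ∀ v, φ v * φ y = φ v := by
    by_cases hφ : ∃ z, φ z ≠ 0
    · obtain ⟨z, hz⟩ := hφ
      exact ⟨(φ z)⁻¹ • z, fun v => by simp [hz]⟩
    · exact ⟨0, fun v => by simp [not_not.1 (not_exists.1 hφ v)]⟩
  obtain ⟨θ, hθ⟩ : ∃ θ : Module.Dual K V, ∀ v, θ v = 2 * B y v - B y y * φ v :=
    ⟨2 • B y - B y y • φ, fun v => by simp⟩
  have hself (v : V) : B v v = θ v * φ v := by
    have hv := h (v - φ v • y) (by simp [hy])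
    simp only [map_sub, map_smul, LinearMap.sub_apply, LinearMap.smul_apply, smul_eq_mul,
      hB.eq v y] at hv
    linear_combination hv - φ v * hθ v
  refine ⟨θ, fun u v => ?_⟩
  have hadd := hself (u + v)
  simp only [map_add, LinearMap.add_apply, hself u, hself v, hB.eq v u] at hadd
  rw [eq_div_iff two_ne_zero]
  linear_combination hadd

lemma eq_zero_of_sum_smul_eq_zero_of_generalPosition {n : ℕ} {v : Fin (n + 2) → V}
    (hv : ∀ σ : Fin n → Fin (n + 2), Function.Injective σ → LinearIndependent K (v ∘ σ))
    {c : Fin (n + 2) → K} (hc : ∑ k, c k • v k = 0) {i j : Fin (n + 2)} (hij : i ≠ j)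
    (hi : c i = 0) (hj : c j = 0) : c = 0 := by
  obtain ⟨l, rfl⟩ := (j.eq_self_or_eq_succAbove i).resolve_left hij
  have hli := hv _ (j.succAbove_right_injective.comp l.succAbove_right_injective)
  rw [Fin.sum_univ_succAbove _ j, Fin.sum_univ_succAbove _ l, hi, hj, zero_smul, zero_smul,
    zero_add, zero_add] at hc
  have h0 := Fintype.linearIndependent_iff.1 hli _ hc
  rw [funext_iff, j.forall_iff_succAbove, l.forall_iff_succAbove]
  exact ⟨hj, hi, h0⟩

lemma coeff_ne_zero_and_div_injective_of_generalPosition {n : ℕ} {v : Fin (n + 2) → V}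
    (hv : ∀ σ : Fin n → Fin (n + 2), Function.Injective σ → LinearIndependent K (v ∘ σ))
    (e : Fin (n + 2)) {a c : Fin n → K}
    (ha : v e = ∑ m, a m • v (e.succAbove m.castSucc))
    (hc : v (e.succAbove (Fin.last n)) = ∑ m, c m • v (e.succAbove m.castSucc)) :
    (∀ m, a m ≠ 0) ∧ (∀ m, c m ≠ 0) ∧ Function.Injective fun m => c m / a m := by
  -- Every relation `s • ha + t • hc` has at most one vanishing coefficient, unless it is trivial.
  let r (s t : K) : Fin (n + 2) → K :=
    e.insertNth (-s) (Fin.snoc (α := fun _ => K) (fun m => s * a m + t * c m) (-t))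
  have hr (s t : K) : ∑ k, r s t k • v k = 0 := by
    simp only [r, Fin.sum_univ_succAbove _ e, Fin.sum_univ_castSucc, Fin.insertNth_apply_same,
      Fin.insertNth_apply_succAbove, Fin.snoc_castSucc, Fin.snoc_last, ha, hc, Finset.smul_sum,
      add_smul, mul_smul, Finset.sum_add_distrib, neg_smul, Finset.sum_neg_distrib]
    abel
  have hrm (s t : K) (m : Fin n) : r s t (e.succAbove m.castSucc) = s * a m + t * c m := by
    simp [r]
  have hr0 {s t : K} {i j : Fin (n + 2)} (hij : i ≠ j) :=
    eq_zero_of_sum_smul_eq_zero_of_generalPosition hv (hr s t) hij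
  have ha0 (m : Fin n) : a m ≠ 0 := fun h => by
    have hne := e.succAbove_right_injective.ne (Fin.castSucc_ne_last m)
    simpa [r] using congrFun (hr0 (s := 1) (t := 0) hne (by simp [r, h]) (by simp [r])) e
  refine ⟨ha0, fun m h => ?_, fun i j hij => ?_⟩
  · have hne := (e.succAbove_ne m.castSucc).symm
    simpa [r] using congrFun (hr0 (s := 0) (t := 1) hne (by simp [r]) (by simp [r, h]))
      (e.succAbove (Fin.last n))
  · by_contra hne
    simp only [div_eq_div_iff (ha0 i) (ha0 j)] at hij
    replace hne := e.succAbove_right_injective.ne ((Fin.castSucc_injective n).ne hne)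
    simpa [r, ha0] using congrFun (hr0 (s := c i) (t := -a i) hne (by rw [hrm]; ring)
      (by rw [hrm]; linear_combination hij)) (e.succAbove (Fin.last n))

/-- For `i = j` the formula for `T` reads `1 / 0 * _ = 0`, as antisymmetry demands. -/
lemma web_equations_iff {ι : Type*} [NeZero (2 : K)] {b μ : ι → K} {T B : ι → ι → K}
    (hb : Function.Injective b) (hb0 : ∀ i, b i ≠ 0) :
    ((∀ i j, T i j + T j i = 0) ∧ ∀ i j,
        (b i * T i j + B i j - b i * μ j) + (b j * T j i + B j i - b j * μ i) = 0) ↔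
      (∀ i, μ i = B i i / b i) ∧ ∀ i j, T i j = 1 / (b i - b j) *
        (b i * (B j j / b j - B i j / b i) - b j * (B j i / b j - B i i / b i)) := by
  have h2 : (2 : K) ≠ 0 := two_ne_zero
  have clear (hμ : ∀ i, μ i = B i i / b i) (i j : ι) :
      b i * (B j j / b j - B i j / b i) - b j * (B j i / b j - B i i / b i) =
        b i * μ j - B i j - (B j i - b j * μ i) := by
    rw [hμ, hμ, mul_sub, mul_sub, mul_div_cancel₀ (B i j) (hb0 i), mul_div_cancel₀ (B j i) (hb0 j)]
  constructor
  · rintro ⟨hT, hβ⟩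
    have hTd (i : ι) : T i i = 0 := by
      simpa [h2] using (two_mul (T i i)).trans (hT i i)
    have hμ (i : ι) : μ i = B i i / b i := by
      rw [eq_div_iff (hb0 i)]
      refine mul_left_cancel₀ h2 ?_
      linear_combination 2 * b i * hTd i - hβ i i
    refine ⟨hμ, fun i j => ?_⟩
    rcases eq_or_ne i j with rfl | hij
    · simp [hTd]
    · rw [clear hμ, one_div_mul_eq_div, eq_div_iff (sub_ne_zero.2 (hb.ne hij))]
      linear_combination hβ i j - b j * hT i j
  · rintro ⟨hμ, hT⟩
    have hanti (i j : ι) : T i j + T j i = 0 := by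
      rw [hT, hT, ← neg_sub (b i) (b j), one_div_neg_eq_neg_one_div]
      ring
    refine ⟨hanti, fun i j => ?_⟩
    have hcross : (b i - b j) * T i j = b i * μ j - B i j - (B j i - b j * μ i) := by
      rcases eq_or_ne i j with rfl | hij
      · rw [hμ, mul_div_cancel₀ _ (hb0 i)]
        ring
      · rw [hT, clear hμ, ← mul_assoc, mul_one_div_cancel (sub_ne_zero.2 (hb.ne hij)), one_mul]
    linear_combination hcross + b j * hanti i j

end GeneralPosition

section Smoothness

variable {𝕜 E ι : Type*} [NontriviallyNormedField 𝕜] [NormedAddCommGroup E] [NormedSpace 𝕜 E]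
  [Fintype ι] [DecidableEq ι] {A : E → Matrix ι ι 𝕜} {s : Set E} {k : WithTop ℕ∞}

lemma contDiffOn_matrix_det (hA : ∀ i j, ContDiffOn 𝕜 k (fun x => A x i j) s) :
    ContDiffOn 𝕜 k (fun x => (A x).det) s := by
  simp only [det_apply']
  exact ContDiffOn.sum fun σ _ => contDiffOn_const.mul (contDiffOn_prod fun i _ => hA _ _)

lemma contDiffOn_matrix_inv (hA : ∀ i j, ContDiffOn 𝕜 k (fun x => A x i j) s)
    (hdet : ∀ x ∈ s, (A x).det ≠ 0) (i j : ι) : ContDiffOn 𝕜 k (fun x => (A x)⁻¹ i j) s := by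
  simp only [inv_def, Ring.inverse_eq_inv', Matrix.smul_apply, adjugate_apply, smul_eq_mul]
  refine ((contDiffOn_matrix_det hA).inv hdet).mul (contDiffOn_matrix_det fun l m => ?_)
  rcases eq_or_ne l j with rfl | hl
  · simpa using contDiffOn_const
  · simpa [updateRow_ne hl] using hA l m

variable {n : ℕ} {U : Set (Fin n → ℝ)} {f : (Fin n → ℝ) → ℝ}

lemma contDiffOn_pd (hU : IsOpen U) (hf : ContDiffOn ℝ (⊤ : ℕ∞) f U) (i : Fin n) :
    ContDiffOn ℝ (⊤ : ℕ∞) (pd i f) U :=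
  (hf.fderiv_of_isOpen hU (m := ((⊤ : ℕ∞) : WithTop ℕ∞)) (by simp)).clm_apply contDiffOn_const

lemma sum_pd_mul (f : (Fin n → ℝ) → ℝ) (x v : Fin n → ℝ) :
    ∑ i, pd i f x * v i = fderiv ℝ f x v := by
  rw [← ContinuousLinearMap.coe_coe, LinearMap.pi_apply_eq_sum_univ]
  refine Finset.sum_congr rfl fun i _ => ?_
  rw [smul_eq_mul, mul_comm, pd, ContinuousLinearMap.coe_coe]
  congr 2
  ext j
  simp [Pi.single_apply, eq_comm]

end Smoothness

section SymmetricDifferential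

variable {n : ℕ} {U : Set (Fin n → ℝ)} {Γ : Fin n → Fin n → Fin n → (Fin n → ℝ) → ℝ}
  {ω η θ : (Fin n → ℝ) → Fin n → ℝ} {x : Fin n → ℝ}

lemma dsym_congr (h : ω =ᶠ[nhds x] η) (p q : Fin n) : dsym Γ ω p q x = dsym Γ η p q x := by
  have hpd (i j : Fin n) : pd i (fun y => ω y j) x = pd i (fun y => η y j) x := by
    have hj : (fun y => ω y j) =ᶠ[nhds x] fun y => η y j := h.fun_comp fun v => v j
    rw [pd, pd, hj.fderiv_eq]
  simp only [dsym, hpd, h.self_of_nhds]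

lemma forall_dsym_eq_zero_congr (hU : IsOpen U) (h : Set.EqOn ω η U) :
    (∀ x ∈ U, ∀ p q, dsym Γ ω p q x = 0) ↔ ∀ x ∈ U, ∀ p q, dsym Γ η p q x = 0 :=
  forall₂_congr fun x hx => by
    simp only [dsym_congr (h.eventuallyEq_of_mem (hU.mem_nhds hx))]

lemma contDiffOn_symProd (hθ : ContDiffOn ℝ (⊤ : ℕ∞) θ U) (hω : ContDiffOn ℝ (⊤ : ℕ∞) ω U)
    (p q : Fin n) : ContDiffOn ℝ (⊤ : ℕ∞) (symProd θ ω p q) U := by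
  rw [contDiffOn_pi] at hθ hω
  exact (((hθ p).mul (hω q)).add ((hθ q).mul (hω p))).div_const 2

lemma symProd_swap (θ ω : (Fin n → ℝ) → Fin n → ℝ) (p q : Fin n) :
    symProd θ ω p q = symProd θ ω q p :=
  funext fun x => by simp only [symProd, add_comm]

lemma dsym_sum_smul {ι : Type*} [Fintype ι] {c : ι → (Fin n → ℝ) → ℝ}
    {w : ι → (Fin n → ℝ) → Fin n → ℝ} (hc : ∀ m, DifferentiableAt ℝ (c m) x)
    (hw : ∀ m, DifferentiableAt ℝ (w m) x) (p q : Fin n) :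
    dsym Γ (fun y => ∑ m, c m y • w m y) p q x =
      ∑ m, (c m x * dsym Γ (w m) p q x + symProd (fun y k => pd k (c m) y) (w m) p q x) := by
  have hwk (m : ι) (k : Fin n) := differentiableAt_pi.1 (hw m) k
  have hpd (i j : Fin n) : pd i (fun y => (∑ m, c m y • w m y) j) x =
      ∑ m, (c m x * pd i (fun y => w m y j) x + w m x j * pd i (c m) x) := by
    simp only [pd, Finset.sum_apply, Pi.smul_apply, smul_eq_mul]
    rw [fderiv_fun_sum fun m _ => (hc m).fun_mul (hwk m j), _root_.sum_apply]
    simp only [fderiv_fun_mul (hc _) (hwk _ j), _root_.add_apply,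
      _root_.smul_apply, smul_eq_mul]
  have hΓ : ∑ k, Γ k p q x * (∑ m, c m x • w m x) k =
      ∑ m, c m x * ∑ k, Γ k p q x * w m x k := by
    simp only [Finset.sum_apply, Pi.smul_apply, smul_eq_mul, Finset.mul_sum]
    rw [Finset.sum_comm]
    simp only [mul_left_comm]
  rw [dsym, hpd, hpd, hΓ, ← Finset.sum_add_distrib, Finset.sum_div, ← Finset.sum_sub_distrib]
  refine Finset.sum_congr rfl fun m _ => ?_
  simp only [dsym, symProd]
  ring

end SymmetricDifferential

section DualFrame

variable {n : ℕ} {U : Set (Fin n → ℝ)} {w X : Fin n → (Fin n → ℝ) → Fin n → ℝ} {x : Fin n → ℝ}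

lemma exists_isDualFrame (hw : ∀ m, ContDiffOn ℝ (⊤ : ℕ∞) (w m) U)
    (hli : ∀ x ∈ U, LinearIndependent ℝ fun m => w m x) :
    ∃ X, IsDualFrame U w X := by
  let W : (Fin n → ℝ) → Matrix (Fin n) (Fin n) ℝ := fun x => of fun m => w m x
  have hdet (x) (hx : x ∈ U) : IsUnit (W x).det :=
    (isUnit_iff_isUnit_det _).1 (linearIndependent_rows_iff_isUnit.1 (hli x hx))
  refine ⟨fun j x k => (W x)⁻¹ k j, fun j => contDiffOn_pi.2 fun k => ?_, fun x hx i j => ?_⟩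
  · exact contDiffOn_matrix_inv (fun m l => contDiffOn_pi.1 (hw m) l)
      (fun x hx => (hdet x hx).ne_zero) k j
  · have h := congrFun₂ (mul_nonsing_inv (W x) (hdet x hx)) i j
    rwa [mul_apply, one_apply] at h

namespace IsDualFrame

lemma smul (hX : IsDualFrame U w X) {g : Fin n → (Fin n → ℝ) → ℝ}
    (hg : ∀ m, ContDiffOn ℝ (⊤ : ℕ∞) (g m) U) (hg0 : ∀ x ∈ U, ∀ m, g m x ≠ 0) :
    IsDualFrame U (fun m x => g m x • w m x) fun m x => (g m x)⁻¹ • X m x := by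
  refine ⟨fun m => ((hg m).inv fun x hx => hg0 x hx m).smul (hX.1 m), fun x hx i j => ?_⟩
  have h := hX.2 x hx i j
  simp only [← dotProduct.eq_1] at h ⊢
  rw [smul_dotProduct, dotProduct_smul, h]
  rcases eq_or_ne i j with rfl | hij
  · simp [hg0 x hx i]
  · simp [hij]

lemma mul_transpose_eq_one (hX : IsDualFrame U w X) (hx : x ∈ U) :
    (of fun m => w m x) * (of fun m => X m x)ᵀ = 1 := by
  ext i j
  rw [mul_apply, one_apply]
  exact hX.2 x hx i j

lemma eq_sum_dotProduct_smul (hX : IsDualFrame U w X) (hx : x ∈ U) (ξ : Fin n → ℝ) :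
    ξ = ∑ j, (ξ ⬝ᵥ X j x) • w j x := by
  have h := mul_eq_one_comm.1 (hX.mul_transpose_eq_one hx)
  calc ξ = (ξ ᵥ* (of fun m => X m x)ᵀ) ᵥ* (of fun m => w m x) := by
        rw [vecMul_vecMul, h, vecMul_one]
    _ = ∑ j, (ξ ⬝ᵥ X j x) • w j x := vecMul_eq_sum _ _

lemma sum_smul_dotProduct (hX : IsDualFrame U w X) (hx : x ∈ U) (a : Fin n → ℝ) (j : Fin n) :
    (∑ m, a m • w m x) ⬝ᵥ X j x = a j := by
  have h (m : Fin n) : w m x ⬝ᵥ X j x = if m = j then 1 else 0 := hX.2 x hx m j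
  simp [sum_dotProduct, smul_dotProduct, h]

lemma sum_symProd_eq_zero_iff (hX : IsDualFrame U w X) (hx : x ∈ U)
    (M : Fin n → (Fin n → ℝ) → Fin n → ℝ) :
    (∀ p q, ∑ m, symProd (M m) (w m) p q x = 0) ↔
      ∀ i j, M i x ⬝ᵥ X j x + M j x ⬝ᵥ X i x = 0 := by
  set W : Matrix (Fin n) (Fin n) ℝ := of fun m => w m x
  set Y : Matrix (Fin n) (Fin n) ℝ := of fun m => X m x
  set N : Matrix (Fin n) (Fin n) ℝ := of fun m => M m x
  have hWY : W * Yᵀ = 1 := hX.mul_transpose_eq_one hx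
  have hYW : Y * Wᵀ = 1 := by rw [← transpose_transpose Y, ← transpose_mul, hWY, transpose_one]
  have hcoord : (∀ p q, ∑ m, symProd (M m) (w m) p q x = 0) ↔ Nᵀ * W + Wᵀ * N = 0 := by
    rw [← Matrix.ext_iff]
    refine forall₂_congr fun p q => ?_
    simp only [symProd, ← Finset.sum_div, Finset.sum_add_distrib, Matrix.add_apply, mul_apply,
      transpose_apply, Matrix.zero_apply, div_eq_zero_iff, two_ne_zero, or_false, N, W, of_apply,
      mul_comm (M _ x q)]
  have hframe : (∀ i j, M i x ⬝ᵥ X j x + M j x ⬝ᵥ X i x = 0) ↔ N * Yᵀ + Y * Nᵀ = 0 := by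
    rw [← Matrix.ext_iff]
    refine forall₂_congr fun i j => ?_
    rw [dotProduct_comm (M j x)]
    rfl
  have hconj : N * Yᵀ + Y * Nᵀ = Y * (Nᵀ * W + Wᵀ * N) * Yᵀ := by
    rw [mul_add, add_mul, ← mul_assoc Y Wᵀ, hYW, one_mul, mul_assoc Y, mul_assoc Nᵀ, hWY, mul_one,
      add_comm]
  rw [hcoord, hframe, hconj, (IsUnit.of_mul_eq_one _ (mul_eq_one_comm.1 hWY)).mul_left_eq_zero,
    (IsUnit.of_mul_eq_one _ hYW).mul_right_eq_zero]

end IsDualFrame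

lemma exists_isTorsionFreeConn_dsym_eq (hU : IsOpen U) (hX : IsDualFrame U w X)
    (hw : ∀ m, ContDiffOn ℝ (⊤ : ℕ∞) (w m) U) {H : Fin n → Fin n → Fin n → (Fin n → ℝ) → ℝ}
    (hH : ∀ m p q, ContDiffOn ℝ (⊤ : ℕ∞) (H m p q) U) (hsymm : ∀ m p q, H m p q = H m q p) :
    ∃ Γ, IsTorsionFreeConn U Γ ∧ ∀ x ∈ U, ∀ m p q, dsym Γ (w m) p q x = H m p q x := by
  have hw' (m : Fin n) := contDiffOn_pi.1 (hw m)
  let D (m p q : Fin n) (x : Fin n → ℝ) : ℝ :=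
    (pd p (fun y => w m y q) x + pd q (fun y => w m y p) x) / 2 - H m p q x
  have hD (m p q : Fin n) : ContDiffOn ℝ (⊤ : ℕ∞) (D m p q) U :=
    (((contDiffOn_pd hU (hw' m q) p).add (contDiffOn_pd hU (hw' m p) q)).div_const 2).sub
      (hH m p q)
  refine ⟨fun k p q x => ∑ m, D m p q x * X m x k, ⟨fun k p q => ?_, fun k p q x => ?_⟩,
    fun x hx m p q => ?_⟩
  · exact ContDiffOn.sum fun m _ => (hD m p q).mul (contDiffOn_pi.1 (hX.1 m) k)
  · simp only [D, add_comm, hsymm]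
  · have hcontr : ∑ k, (∑ l, D l p q x * X l x k) * w m x k = D m p q x := by
      simp only [Finset.sum_mul, mul_assoc]
      rw [Finset.sum_comm]
      simp only [← Finset.mul_sum, mul_comm (X _ x _), hX.2 x hx]
      simp
    rw [dsym, hcontr]
    exact sub_sub_cancel _ _

lemma IsDualFrame.christoffel_eq_of_dsym_eq (hX : IsDualFrame U w X) (hx : x ∈ U)
    {Γ Γ' : Fin n → Fin n → Fin n → (Fin n → ℝ) → ℝ}
    (h : ∀ m p q, dsym Γ (w m) p q x = dsym Γ' (w m) p q x) (k p q : Fin n) :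
    Γ k p q x = Γ' k p q x := by
  have hW : IsUnit (of fun m => w m x) := IsUnit.of_mul_eq_one _ (hX.mul_transpose_eq_one hx)
  refine congrFun (mulVec_injective_of_isUnit hW (a₁ := fun k => Γ k p q x)
    (a₂ := fun k => Γ' k p q x) (funext fun m => ?_)) k
  have hm := sub_right_injective (h m p q)
  simpa only [mulVec, dotProduct, of_apply, mul_comm] using hm

end DualFrame

section OrdinaryDifferentialEquations

variable {E : Type*} [NormedAddCommGroup E] [NormedSpace ℝ E]

lemma eqOn_zero_of_hasDerivAt_smul_self {I : Set ℝ} (hI : IsOpen I) (hIc : I.OrdConnected)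
    {g : ℝ → E} {c : ℝ → ℝ} (hc : ContinuousOn c I) (hg : ∀ t ∈ I, HasDerivAt g (c t • g t) t)
    {s : ℝ} (hs : s ∈ I) (hgs : g s = 0) : Set.EqOn g 0 I := by
  have hC (u) (hu : u ∈ I) : HasDerivAt (fun u => ∫ τ in s..u, c τ) (c u) u :=
    intervalIntegral.integral_hasDerivAt_right
      (hc.mono (hIc.uIcc_subset hs hu)).intervalIntegrable
      (hc.stronglyMeasurableAtFilter hI u hu) (hc.continuousAt (hI.mem_nhds hu))
  have hconst (u) (hu : u ∈ I) :
      HasDerivAt (fun u => Real.exp (-∫ τ in s..u, c τ) • g u) 0 u := by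
    refine ((hC u hu).fun_neg.exp.smul (hg u hu)).congr_deriv ?_
    rw [smul_smul, ← add_smul, mul_neg, add_neg_cancel, zero_smul]
  intro t ht
  have h := hI.is_const_of_deriv_eq_zero hIc.isPreconnected
    (fun u hu => (hconst u hu).differentiableAt.differentiableWithinAt)
    (fun u hu => (hconst u hu).deriv) ht hs
  simpa [hgs, Real.exp_ne_zero] using h

lemma exists_hasDerivAt_mem_of_contDiffOn [CompleteSpace E] {F : E → E} {Ω : Set E}
    (hΩ : IsOpen Ω) (hF : ContDiffOn ℝ 1 F Ω) {z : E} (hz : z ∈ Ω) :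
    ∃ α : ℝ → E, α 0 = z ∧ ∃ ε > 0, ∀ t ∈ Set.Ioo (-ε) ε, α t ∈ Ω ∧ HasDerivAt α (F (α t)) t := by
  have hFz : ContDiffAt ℝ 1 F z := hF.contDiffAt (hΩ.mem_nhds hz)
  obtain ⟨r, hr, ε, hε, hα⟩ :=
    hFz.exists_forall_mem_closedBall_exists_eq_forall_mem_Ioo_hasDerivAt 0
  obtain ⟨α, hα0, hαd⟩ := hα z (Metric.mem_closedBall_self hr.le)
  have hcont : ContinuousAt α 0 := (hαd 0 (by simp [hε])).continuousAt
  obtain ⟨δ, hδ, hδΩ⟩ := Metric.mem_nhds_iff.1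
    (hcont.preimage_mem_nhds (hΩ.mem_nhds (hα0.symm ▸ hz)))
  refine ⟨α, hα0, min ε δ, lt_min hε hδ, fun t ht => ?_⟩
  rw [Set.mem_Ioo, ← abs_lt, lt_min_iff] at ht
  exact ⟨hδΩ (by simpa using ht.2), hαd t (by simpa [abs_lt] using ht.1)⟩

lemma contDiffOn_succ_of_hasDerivAt {I : Set ℝ} (hI : IsOpen I) {k : ℕ} {α β : ℝ → E}
    (hα : ∀ t ∈ I, HasDerivAt α (β t) t) (hβ : ContDiffOn ℝ k β I) :
    ContDiffOn ℝ (k + 1) α I :=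
  (contDiffOn_succ_iff_deriv_of_isOpen hI).2
    ⟨fun t ht => (hα t ht).differentiableAt.differentiableWithinAt, by simp,
      hβ.congr fun t ht => (hα t ht).deriv⟩

end OrdinaryDifferentialEquations

section Geodesics

variable {n : ℕ} {U : Set (Fin n → ℝ)} {Γ : Fin n → Fin n → Fin n → (Fin n → ℝ) → ℝ}
  {ω θ : (Fin n → ℝ) → Fin n → ℝ} {x : Fin n → ℝ}

/-- The geodesic spray: the vector field on the tangent space whose integral curves are the
pairs `(γ, γ̇)` with `γ` a geodesic. -/
def geodesicSpray (Γ : Fin n → Fin n → Fin n → (Fin n → ℝ) → ℝ)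
    (z : (Fin n → ℝ) × (Fin n → ℝ)) : (Fin n → ℝ) × (Fin n → ℝ) :=
  (z.2, fun k => -∑ i, ∑ j, Γ k i j z.1 * z.2 i * z.2 j)

lemma IsTorsionFreeConn.contDiffOn_geodesicSpray (hΓ : IsTorsionFreeConn U Γ) :
    ContDiffOn ℝ 1 (geodesicSpray Γ) (U ×ˢ Set.univ) := by
  have hvel (i : Fin n) : ContDiffOn ℝ 1 (fun z : (Fin n → ℝ) × (Fin n → ℝ) => z.2 i)
      (U ×ˢ Set.univ) := contDiffOn_pi.1 contDiffOn_snd i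
  have hsymb (k i j : Fin n) : ContDiffOn ℝ 1
      (fun z : (Fin n → ℝ) × (Fin n → ℝ) => Γ k i j z.1) (U ×ˢ Set.univ) :=
    ((hΓ.1 k i j).of_le (by exact_mod_cast le_top)).comp contDiffOn_fst fun z hz => hz.1
  exact contDiffOn_snd.prodMk (contDiffOn_pi.2 fun k => ContDiffOn.neg <|
    ContDiffOn.sum fun i _ => ContDiffOn.sum fun j _ => ((hsymb k i j).mul (hvel i)).mul (hvel j))

lemma deriv_apply_of_hasDerivAt {I : Set ℝ} {γ v : ℝ → Fin n → ℝ}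
    (h : ∀ t ∈ I, HasDerivAt γ (v t) t) {t : ℝ} (ht : t ∈ I) (k : Fin n) :
    deriv (fun u => γ u k) t = v t k :=
  (hasDerivAt_pi.1 (h t ht) k).deriv

lemma isGeodesicOn_of_hasDerivAt_geodesicSpray (hΓ : IsTorsionFreeConn U Γ) {I : Set ℝ}
    (hI : IsOpen I) {α : ℝ → (Fin n → ℝ) × (Fin n → ℝ)} (hmem : ∀ t ∈ I, (α t).1 ∈ U)
    (hα : ∀ t ∈ I, HasDerivAt α (geodesicSpray Γ (α t)) t) :
    IsGeodesicOn U Γ I fun t => (α t).1 := by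
  have hpos (t) (ht : t ∈ I) : HasDerivAt (fun t => (α t).1) (α t).2 t := (hα t ht).fst
  have hcont : ContinuousOn α I := fun t ht => (hα t ht).continuousAt.continuousWithinAt
  have hspray : ContinuousOn (fun t => geodesicSpray Γ (α t)) I :=
    hΓ.contDiffOn_geodesicSpray.continuousOn.comp hcont fun t ht => ⟨hmem t ht, trivial⟩
  have hC1 : ContDiffOn ℝ 1 α I := by
    simpa using contDiffOn_succ_of_hasDerivAt (k := 0) hI hα (contDiffOn_zero.2 hspray)
  refine ⟨hmem, ?_, fun t ht k => ?_⟩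
  · simpa [one_add_one_eq_two] using
      contDiffOn_succ_of_hasDerivAt (k := 1) hI hpos (by simpa using hC1.snd)
  · have hacc : HasDerivAt (fun s => deriv (fun u => (α u).1 k) s)
        ((geodesicSpray Γ (α t)).2 k) t := by
      refine (hasDerivAt_pi.1 (hα t ht).snd k).congr_of_eventuallyEq ?_
      filter_upwards [hI.mem_nhds ht] with s hs using deriv_apply_of_hasDerivAt hpos hs k
    rw [hacc.deriv]
    simp only [deriv_apply_of_hasDerivAt hpos ht, geodesicSpray]
    exact neg_add_cancel _

lemma IsTorsionFreeConn.exists_isGeodesicOn (hU : IsOpen U) (hΓ : IsTorsionFreeConn U Γ)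
    (hx : x ∈ U) (v : Fin n → ℝ) :
    ∃ ε > 0, ∃ γ : ℝ → Fin n → ℝ, IsGeodesicOn U Γ (Set.Ioo (-ε) ε) γ ∧ γ 0 = x ∧
      ∀ k, deriv (fun u => γ u k) 0 = v k := by
  obtain ⟨α, hα0, ε, hε, hα⟩ := exists_hasDerivAt_mem_of_contDiffOn (hU.prod isOpen_univ)
    hΓ.contDiffOn_geodesicSpray (z := (x, v)) ⟨hx, trivial⟩
  refine ⟨ε, hε, fun t => (α t).1, isGeodesicOn_of_hasDerivAt_geodesicSpray hΓ isOpen_Ioo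
    (fun t ht => (hα t ht).1.1) fun t ht => (hα t ht).2, congrArg Prod.fst hα0, fun k => ?_⟩
  rw [deriv_apply_of_hasDerivAt (fun t ht => (hα t ht).2.fst) (t := 0) ⟨by linarith, hε⟩, hα0]
  rfl

/-- The symmetric covariant differential `d^s_Γ ω` at `x` as a bilinear form. -/
noncomputable def dsymForm (Γ : Fin n → Fin n → Fin n → (Fin n → ℝ) → ℝ)
    (ω : (Fin n → ℝ) → Fin n → ℝ) (x : Fin n → ℝ) : LinearMap.BilinForm ℝ (Fin n → ℝ) :=
  Matrix.toBilin' (of fun i j => dsym Γ ω i j x)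

lemma IsTorsionFreeConn.isSymm_dsymForm (hΓ : IsTorsionFreeConn U Γ)
    (ω : (Fin n → ℝ) → Fin n → ℝ) (x : Fin n → ℝ) : (dsymForm Γ ω x).IsSymm := by
  refine Matrix.isSymm_toBilin'_iff_isSymm.2 (IsSymm.ext fun i j => ?_)
  simp only [of_apply, dsym, hΓ.2 _ i j, add_comm]

lemma dsymForm_self (Γ : Fin n → Fin n → Fin n → (Fin n → ℝ) → ℝ)
    (ω : (Fin n → ℝ) → Fin n → ℝ) (x v : Fin n → ℝ) :
    dsymForm Γ ω x v v = ∑ k, (fderiv ℝ (fun y => ω y k) x v * v k +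
      ω x k * -∑ i, ∑ j, Γ k i j x * v i * v j) := by
  have hswap : ∑ i, ∑ j, v i * pd j (fun y => ω y i) x * v j =
      ∑ i, ∑ j, v i * pd i (fun y => ω y j) x * v j := by
    rw [Finset.sum_comm]
    exact Finset.sum_congr rfl fun i _ => Finset.sum_congr rfl fun j _ => by ring
  have hderiv : ∑ k, fderiv ℝ (fun y => ω y k) x v * v k =
      ∑ i, ∑ j, v i * pd i (fun y => ω y j) x * v j := by
    simp only [← sum_pd_mul, Finset.sum_mul, mul_comm (v _)]
    exact Finset.sum_comm
  have hsymb : ∑ k, ω x k * ∑ i, ∑ j, Γ k i j x * v i * v j =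
      ∑ i, ∑ j, v i * (∑ k, Γ k i j x * ω x k) * v j := by
    simp only [Finset.mul_sum, Finset.sum_mul]
    rw [Finset.sum_comm]
    refine Finset.sum_congr rfl fun i _ => Finset.sum_comm.trans ?_
    exact Finset.sum_congr rfl fun j _ => Finset.sum_congr rfl fun k _ => by ring
  rw [dsymForm, Matrix.toBilin'_apply]
  simp only [of_apply, dsym, mul_neg, Finset.sum_add_distrib, Finset.sum_neg_distrib, hderiv, hsymb,
    mul_sub, sub_mul, Finset.sum_sub_distrib, mul_div_assoc', div_mul_eq_mul_div, mul_add, add_mul,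
    ← Finset.sum_div, hswap]
  ring

lemma IsGeodesicOn.hasDerivAt_form (hU : IsOpen U) (hω : ContDiffOn ℝ (⊤ : ℕ∞) ω U)
    {I : Set ℝ} (hI : IsOpen I) {γ : ℝ → Fin n → ℝ} (hγ : IsGeodesicOn U Γ I γ) {t : ℝ}
    (ht : t ∈ I) :
    HasDerivAt (fun s => ∑ k, ω (γ s) k * deriv (fun u => γ u k) s)
      (dsymForm Γ ω (γ t) (fun k => deriv (fun u => γ u k) t)
        fun k => deriv (fun u => γ u k) t) t := by
  obtain ⟨hmem, hC, hgeo⟩ := hγ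
  have hCk := contDiffOn_pi.1 hC
  have hvel (k : Fin n) : HasDerivAt (fun u => γ u k) (deriv (fun u => γ u k) t) t :=
    (((hCk k).contDiffAt (hI.mem_nhds ht)).differentiableAt (by simp)).hasDerivAt
  have hacc (k : Fin n) : HasDerivAt (deriv fun u => γ u k)
      (-∑ i, ∑ j, Γ k i j (γ t) * deriv (fun u => γ u i) t * deriv (fun u => γ u j) t) t := by
    have h : ContDiffOn ℝ 1 (deriv fun u => γ u k) I :=
      ((contDiffOn_succ_iff_deriv_of_isOpen (n := 1) hI).1 (hCk k)).2.2
    rw [← eq_neg_of_add_eq_zero_left (hgeo t ht k)]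
    exact ((h.contDiffAt (hI.mem_nhds ht)).differentiableAt (by simp)).hasDerivAt
  have hcoeff (k : Fin n) : HasDerivAt (fun s => ω (γ s) k)
      (fderiv ℝ (fun y => ω y k) (γ t) fun i => deriv (fun u => γ u i) t) t :=
    (((contDiffOn_pi.1 hω k).contDiffAt (hU.mem_nhds (hmem t ht))).differentiableAt
      (by simp)).hasFDerivAt.comp_hasDerivAt t (hasDerivAt_pi.2 hvel)
  rw [dsymForm_self]
  exact HasDerivAt.fun_sum fun k _ => (hcoeff k).mul (hacc k)

lemma dsymForm_self_of_dsym_eq_symProd (h : ∀ p q, dsym Γ ω p q x = symProd θ ω p q x)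
    (v : Fin n → ℝ) : dsymForm Γ ω x v v = (θ x ⬝ᵥ v) * (ω x ⬝ᵥ v) := by
  have hmat : of (fun p q => dsym Γ ω p q x) =
      (1 / 2 : ℝ) • (vecMulVec (θ x) (ω x) + vecMulVec (ω x) (θ x)) := by
    ext p q
    simp only [of_apply, h, symProd, Matrix.smul_apply, Matrix.add_apply, vecMulVec_apply,
      smul_eq_mul]
    ring
  rw [dsymForm, hmat, Matrix.toBilin'_apply', smul_mulVec, add_mulVec, vecMulVec_mulVec,
    vecMulVec_mulVec, dotProduct_comm]
  simp only [smul_dotProduct, add_dotProduct, op_smul_eq_smul, smul_eq_mul]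
  ring

lemma totallyGeodesic_of_dsym_eq_symProd (hU : IsOpen U) (hω : ContDiffOn ℝ (⊤ : ℕ∞) ω U)
    (hθ : ContinuousOn θ U)
    (h : ∀ x ∈ U, ∀ p q, dsym Γ ω p q x = symProd θ ω p q x) : TotallyGeodesic U Γ ω := by
  intro I hI hIc h0 γ hγ hγ0 t ht
  refine eqOn_zero_of_hasDerivAt_smul_self hI hIc
    (g := fun t => ∑ k, ω (γ t) k * deriv (fun u => γ u k) t)
    (c := fun t => θ (γ t) ⬝ᵥ fun k => deriv (fun u => γ u k) t) ?_ (fun s hs => ?_) h0 hγ0 ht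
  · refine continuousOn_finsetSum _ fun i _ => ContinuousOn.mul ?_ ?_
    · exact (continuousOn_pi.1 hθ i).comp hγ.2.1.continuousOn hγ.1
    · exact (contDiffOn_pi.1 hγ.2.1 i).continuousOn_deriv_of_isOpen hI (by simp)
  · refine (hγ.hasDerivAt_form hU hω hI hs).congr_deriv ?_
    rw [dsymForm_self_of_dsym_eq_symProd (h _ (hγ.1 s hs))]
    rfl

namespace TotallyGeodesic

lemma dsymForm_self_eq_zero (hU : IsOpen U) (hΓ : IsTorsionFreeConn U Γ)
    (hω : ContDiffOn ℝ (⊤ : ℕ∞) ω U) (h : TotallyGeodesic U Γ ω) (hx : x ∈ U)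
    {v : Fin n → ℝ} (hv : ω x ⬝ᵥ v = 0) : dsymForm Γ ω x v v = 0 := by
  obtain ⟨ε, hε, γ, hγ, rfl, hγv⟩ := hΓ.exists_isGeodesicOn hU hx v
  have h0 : (0 : ℝ) ∈ Set.Ioo (-ε) ε := ⟨by linarith, hε⟩
  have hd := hγ.hasDerivAt_form hU hω isOpen_Ioo h0
  simp only [hγv] at hd
  refine hd.unique ((hasDerivAt_const (0 : ℝ) (0 : ℝ)).congr_of_eventuallyEq ?_)
  filter_upwards [isOpen_Ioo.mem_nhds h0] with t ht
  exact h _ isOpen_Ioo Set.ordConnected_Ioo h0 γ hγ (by simpa only [hγv] using! hv) t ht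

lemma exists_dsym_eq_symProd (hU : IsOpen U) (hΓ : IsTorsionFreeConn U Γ)
    (hω : ContDiffOn ℝ (⊤ : ℕ∞) ω U) (h : TotallyGeodesic U Γ ω) :
    ∃ θ : (Fin n → ℝ) → Fin n → ℝ, ∀ x ∈ U, ∀ p q, dsym Γ ω p q x = symProd θ ω p q x := by
  have hker (x) (hx : x ∈ U) (v : Fin n → ℝ) (hv : dotProductEquiv ℝ (Fin n) (ω x) v = 0) :
      dsymForm Γ ω x v v = 0 := h.dsymForm_self_eq_zero hU hΓ hω hx hv
  choose! θ hθ using fun x hx =>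
    exists_dual_of_forall_ker_apply_self_eq_zero (hΓ.isSymm_dsymForm ω x) (hker x hx)
  refine ⟨fun x k => θ x (Pi.single k 1), fun x hx p q => ?_⟩
  simpa [dsymForm, symProd] using hθ x hx (Pi.single p 1) (Pi.single q 1)

end TotallyGeodesic

lemma totallyGeodesic_congr_smul {g : (Fin n → ℝ) → ℝ} {η : (Fin n → ℝ) → Fin n → ℝ}
    (h : ∀ x ∈ U, g x ≠ 0 ∧ η x = g x • ω x) :
    TotallyGeodesic U Γ η ↔ TotallyGeodesic U Γ ω := by
  have hiff {I : Set ℝ} {γ : ℝ → Fin n → ℝ} (hγ : IsGeodesicOn U Γ I γ) {t : ℝ} (ht : t ∈ I) :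
      ∑ k, η (γ t) k * deriv (fun u => γ u k) t = 0 ↔
        ∑ k, ω (γ t) k * deriv (fun u => γ u k) t = 0 := by
    obtain ⟨hg, hη⟩ := h _ (hγ.1 t ht)
    simp only [hη, Pi.smul_apply, smul_eq_mul, mul_assoc, ← Finset.mul_sum, mul_eq_zero, hg,
      false_or]
  refine forall₄_congr fun I _ _ h0 => forall₂_congr fun γ hγ => ?_
  rw [hiff hγ h0]
  exact imp_congr_right fun _ => forall₂_congr fun t ht => hiff hγ ht

end Geodesics

section NormalizedWeb

variable {n : ℕ} {U : Set (Fin n → ℝ)} {Γ : Fin n → Fin n → Fin n → (Fin n → ℝ) → ℝ}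
  {w X : Fin n → (Fin n → ℝ) → Fin n → ℝ} {b : Fin n → (Fin n → ℝ) → ℝ}

/-- Normal form of a pointed `(n + 2)`-web: `⟨w₁, …, wₙ, ∑ wₘ, ∑ bₘ wₘ⟩` with distinguished
form `∑ wₘ`. In the coframe `w` general position means that the `bₘ` are nonzero and pairwise
distinct. The frame dual to `w` is part of the data. -/
structure IsNormalizedWeb (U : Set (Fin n → ℝ)) (w X : Fin n → (Fin n → ℝ) → Fin n → ℝ)
    (b : Fin n → (Fin n → ℝ) → ℝ) : Prop where
  isDualFrame : IsDualFrame U w X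
  contDiffOn_form : ∀ m, ContDiffOn ℝ (⊤ : ℕ∞) (w m) U
  contDiffOn_coeff : ∀ m, ContDiffOn ℝ (⊤ : ℕ∞) (b m) U
  coeff_ne_zero : ∀ x ∈ U, ∀ m, b m x ≠ 0
  coeff_injective : ∀ x ∈ U, Function.Injective fun m => b m x

/-- The `1`-forms `θᵢ = ∑ⱼ sᵢⱼ wⱼ` built from the web invariants of the normalized web. They are
the only possible recurrence forms `d^s_Γ wᵢ = θᵢ·wᵢ` of a connection adapted to the web. -/
noncomputable def recurrenceForm (w X : Fin n → (Fin n → ℝ) → Fin n → ℝ)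
    (b : Fin n → (Fin n → ℝ) → ℝ) (i : Fin n) (x : Fin n → ℝ) : Fin n → ℝ :=
  ∑ j, sInv X b i j x • w j x

lemma dsym_sum_smul_eq_symProd_iff {θ : Fin n → (Fin n → ℝ) → Fin n → ℝ}
    {μ : (Fin n → ℝ) → Fin n → ℝ} {c : Fin n → (Fin n → ℝ) → ℝ} {x : Fin n → ℝ}
    (hX : IsDualFrame U w X) (hx : x ∈ U) (hc : ∀ m, DifferentiableAt ℝ (c m) x)
    (hw : ∀ m, DifferentiableAt ℝ (w m) x)
    (hθ : ∀ m p q, dsym Γ (w m) p q x = symProd (θ m) (w m) p q x) :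
    (∀ p q, dsym Γ (fun y => ∑ m, c m y • w m y) p q x =
        symProd μ (fun y => ∑ m, c m y • w m y) p q x) ↔
      ∀ i j,
        (c i x * (θ i x ⬝ᵥ X j x) + fderiv ℝ (c i) x (X j x) - c i x * (μ x ⬝ᵥ X j x)) +
        (c j x * (θ j x ⬝ᵥ X i x) + fderiv ℝ (c j) x (X i x) - c j x * (μ x ⬝ᵥ X i x)) = 0 := by
  let M (m : Fin n) (y : Fin n → ℝ) (k : Fin n) : ℝ :=
    c m y * θ m y k + pd k (c m) y - c m y * μ y k
  have hM (i j : Fin n) : M i x ⬝ᵥ X j x =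
      c i x * (θ i x ⬝ᵥ X j x) + fderiv ℝ (c i) x (X j x) - c i x * (μ x ⬝ᵥ X j x) := by
    rw [← sum_pd_mul]
    simp only [M, dotProduct, sub_mul, add_mul, Finset.sum_sub_distrib, Finset.sum_add_distrib,
      mul_assoc, Finset.mul_sum]
  have hdiff (p q : Fin n) : dsym Γ (fun y => ∑ m, c m y • w m y) p q x -
      symProd μ (fun y => ∑ m, c m y • w m y) p q x = ∑ m, symProd (M m) (w m) p q x := by
    have hμ : symProd μ (fun y => ∑ m, c m y • w m y) p q x =
        ∑ m, c m x * symProd μ (w m) p q x := by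
      simp only [symProd, Finset.sum_apply, Pi.smul_apply, smul_eq_mul, mul_div_assoc',
        ← Finset.sum_div, mul_add, Finset.sum_add_distrib, Finset.mul_sum, mul_left_comm]
    rw [dsym_sum_smul hc hw, hμ, ← Finset.sum_sub_distrib]
    refine Finset.sum_congr rfl fun m _ => ?_
    simp only [hθ, symProd, M]
    ring
  simp only [← hM, ← hX.sum_symProd_eq_zero_iff hx, ← hdiff, sub_eq_zero]

namespace IsNormalizedWeb

lemma contDiffOn_dirDeriv (h : IsNormalizedWeb U w X b) (hU : IsOpen U) (i j : Fin n) :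
    ContDiffOn ℝ (⊤ : ℕ∞) (fun x => fderiv ℝ (b i) x (X j x)) U :=
  ((h.contDiffOn_coeff i).fderiv_of_isOpen hU (m := ((⊤ : ℕ∞) : WithTop ℕ∞)) (by simp)).clm_apply
    (h.isDualFrame.1 j)

lemma contDiffOn_sInv (h : IsNormalizedWeb U w X b) (hU : IsOpen U) (i j : Fin n) :
    ContDiffOn ℝ (⊤ : ℕ∞) (sInv X b i j) U := by
  rcases eq_or_ne i j with rfl | hij
  · exact (contDiffOn_const (c := (0 : ℝ))).congr fun x _ => by simp [sInv]
  · have hb := h.contDiffOn_coeff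
    have hlog (k l : Fin n) := (h.contDiffOn_dirDeriv hU k l).div (hb k)
      fun x hx => h.coeff_ne_zero x hx k
    exact (contDiffOn_const.div ((hb i).sub (hb j))
      fun x hx => sub_ne_zero.2 ((h.coeff_injective x hx).ne hij)).mul
        (((hb i).mul ((hlog j j).sub (hlog i j))).sub ((hb j).mul ((hlog j i).sub (hlog i i))))

lemma contDiffOn_recurrenceForm (h : IsNormalizedWeb U w X b) (hU : IsOpen U) (i : Fin n) :
    ContDiffOn ℝ (⊤ : ℕ∞) (recurrenceForm w X b i) U :=
  ContDiffOn.sum fun j _ => (h.contDiffOn_sInv hU i j).smul (h.contDiffOn_form j)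

lemma recurrenceForm_dotProduct (h : IsNormalizedWeb U w X b) {x : Fin n → ℝ} (hx : x ∈ U)
    (i j : Fin n) : recurrenceForm w X b i x ⬝ᵥ X j x = sInv X b i j x :=
  h.isDualFrame.sum_smul_dotProduct hx _ j

lemma dsym_eq_iff {θ : Fin n → (Fin n → ℝ) → Fin n → ℝ}
    {μ : (Fin n → ℝ) → Fin n → ℝ} (h : IsNormalizedWeb U w X b) (hU : IsOpen U) {x : Fin n → ℝ}
    (hx : x ∈ U) (hθ : ∀ m p q, dsym Γ (w m) p q x = symProd (θ m) (w m) p q x) :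
    ((∀ p q, dsym Γ (fun y => ∑ m, w m y) p q x = 0) ∧
      ∀ p q, dsym Γ (fun y => ∑ m, b m y • w m y) p q x =
        symProd μ (fun y => ∑ m, b m y • w m y) p q x) ↔
    (∀ i, μ x ⬝ᵥ X i x = fderiv ℝ (b i) x (X i x) / b i x) ∧
      ∀ i j, θ i x ⬝ᵥ X j x = sInv X b i j x := by
  have hdiff {F : Type} [NormedAddCommGroup F] [NormedSpace ℝ F] {g : (Fin n → ℝ) → F}
      (hg : ContDiffOn ℝ (⊤ : ℕ∞) g U) : DifferentiableAt ℝ g x :=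
    (hg.contDiffAt (hU.mem_nhds hx)).differentiableAt (by simp)
  have hw (m : Fin n) := hdiff (h.contDiffOn_form m)
  have hone := dsym_sum_smul_eq_symProd_iff (c := fun _ _ => 1) (μ := 0) h.isDualFrame hx
    (fun _ => differentiableAt_const 1) hw hθ
  simp only [one_smul, symProd, Pi.zero_apply, zero_mul, add_zero, zero_div, one_mul,
    zero_dotProduct, mul_zero, sub_zero, fderiv_fun_const, _root_.zero_apply] at hone
  rw [hone, dsym_sum_smul_eq_symProd_iff h.isDualFrame hx
    (fun m => hdiff (h.contDiffOn_coeff m)) hw hθ]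
  exact web_equations_iff (μ := fun i => μ x ⬝ᵥ X i x) (T := fun i j => θ i x ⬝ᵥ X j x)
    (B := fun i j => fderiv ℝ (b i) x (X j x)) (h.coeff_injective x hx)
    (h.coeff_ne_zero x hx)

theorem adapted_iff (h : IsNormalizedWeb U w X b) (hU : IsOpen U) (hΓ : IsTorsionFreeConn U Γ) :
    ((∀ m, TotallyGeodesic U Γ (w m)) ∧ TotallyGeodesic U Γ (fun y => ∑ m, b m y • w m y) ∧
        ∀ x ∈ U, ∀ p q, dsym Γ (fun y => ∑ m, w m y) p q x = 0) ↔
      ∀ x ∈ U, ∀ m p q, dsym Γ (w m) p q x = symProd (recurrenceForm w X b m) (w m) p q x := by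
  have hw := h.contDiffOn_form
  have hlast : ContDiffOn ℝ (⊤ : ℕ∞) (fun y => ∑ m, b m y • w m y) U :=
    ContDiffOn.sum fun m _ => (h.contDiffOn_coeff m).smul (hw m)
  constructor
  · rintro ⟨hgeo, hgeo_last, hsum⟩ x hx
    choose θ hθ using fun m => (hgeo m).exists_dsym_eq_symProd hU hΓ (hw m)
    obtain ⟨μ, hμ⟩ := hgeo_last.exists_dsym_eq_symProd hU hΓ hlast
    have hs := ((h.dsym_eq_iff hU hx fun m => hθ m x hx).1 ⟨hsum x hx, hμ x hx⟩).2
    have hrec (m : Fin n) : θ m x = recurrenceForm w X b m x := by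
      rw [h.isDualFrame.eq_sum_dotProduct_smul hx (θ m x)]
      simp only [hs, recurrenceForm]
    intro m p q
    rw [hθ m x hx, symProd, symProd, hrec]
  · intro hrec
    let μ (x : Fin n → ℝ) : Fin n → ℝ := ∑ j, (fderiv ℝ (b j) x (X j x) / b j x) • w j x
    have hμ : ContDiffOn ℝ (⊤ : ℕ∞) μ U := ContDiffOn.sum fun j _ =>
      ((h.contDiffOn_dirDeriv hU j j).div (h.contDiffOn_coeff j)
        fun x hx => h.coeff_ne_zero x hx j).smul (hw j)
    have heq (x) (hx : x ∈ U) := (h.dsym_eq_iff hU (μ := μ) hx (hrec x hx)).2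
      ⟨h.isDualFrame.sum_smul_dotProduct hx _, h.recurrenceForm_dotProduct hx⟩
    exact ⟨fun m => totallyGeodesic_of_dsym_eq_symProd hU (hw m)
        (h.contDiffOn_recurrenceForm hU m).continuousOn fun x hx => hrec x hx m,
      totallyGeodesic_of_dsym_eq_symProd hU hlast hμ.continuousOn fun x hx => (heq x hx).2,
      fun x hx => (heq x hx).1⟩

end IsNormalizedWeb

lemma exists_isNormalizedWeb {ωs : Fin (n + 2) → (Fin n → ℝ) → Fin n → ℝ}
    (hω : ∀ i, ContDiffOn ℝ (⊤ : ℕ∞) (ωs i) U)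
    (hgen : ∀ x ∈ U, ∀ σ : Fin n → Fin (n + 2), Function.Injective σ →
      LinearIndependent ℝ fun i => ωs (σ i) x) (e : Fin (n + 2)) :
    ∃ w X, ∃ b g : Fin n → (Fin n → ℝ) → ℝ, IsNormalizedWeb U w X b ∧
      (∀ x ∈ U, ∀ m, g m x ≠ 0 ∧ w m x = g m x • ωs (e.succAbove m.castSucc) x) ∧
      Set.EqOn (ωs e) (fun x => ∑ m, w m x) U ∧
      Set.EqOn (ωs (e.succAbove (Fin.last n))) (fun x => ∑ m, b m x • w m x) U := by
  obtain ⟨Y, hY⟩ := exists_isDualFrame (fun m : Fin n => hω (e.succAbove m.castSucc))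
    fun x hx => hgen x hx _ (e.succAbove_right_injective.comp (Fin.castSucc_injective n))
  let coeff (l : Fin (n + 2)) (m : Fin n) (x : Fin n → ℝ) : ℝ := ωs l x ⬝ᵥ Y m x
  have hcoeff (l : Fin (n + 2)) (m : Fin n) : ContDiffOn ℝ (⊤ : ℕ∞) (coeff l m) U :=
    ContDiffOn.sum fun k _ => (contDiffOn_pi.1 (hω l) k).mul (contDiffOn_pi.1 (hY.1 m) k)
  have hexpand (l : Fin (n + 2)) (x) (hx : x ∈ U) :
      ωs l x = ∑ m, coeff l m x • ωs (e.succAbove m.castSucc) x :=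
    hY.eq_sum_dotProduct_smul hx _
  have hpos (x) (hx : x ∈ U) := coeff_ne_zero_and_div_injective_of_generalPosition
    (v := fun l => ωs l x) (hgen x hx) e (hexpand e x hx) (hexpand _ x hx)
  let g := coeff e
  let c := coeff (e.succAbove (Fin.last n))
  refine ⟨fun m x => g m x • ωs (e.succAbove m.castSucc) x, fun m x => (g m x)⁻¹ • Y m x,
    fun m x => c m x / g m x, g, ⟨hY.smul (hcoeff e) fun x hx => (hpos x hx).1,
      fun m => (hcoeff e m).smul (hω _), fun m => (hcoeff _ m).div (hcoeff e m)
        fun x hx => (hpos x hx).1 m,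
      fun x hx m => div_ne_zero ((hpos x hx).2.1 m) ((hpos x hx).1 m),
      fun x hx => (hpos x hx).2.2⟩, fun x hx m => ⟨(hpos x hx).1 m, rfl⟩, hexpand e,
      fun x hx => ?_⟩
  simp only [smul_smul, div_mul_cancel₀ _ ((hpos x hx).1 _), g, c]
  exact hexpand _ x hx

theorem exists_isDualFrame_adapted_iff_dsym_eq_symProd (hU : IsOpen U)
    {ωs : Fin (n + 2) → (Fin n → ℝ) → Fin n → ℝ} (hω : ∀ i, ContDiffOn ℝ (⊤ : ℕ∞) (ωs i) U)
    (hgen : ∀ x ∈ U, ∀ σ : Fin n → Fin (n + 2), Function.Injective σ →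
      LinearIndependent ℝ fun i => ωs (σ i) x) (e : Fin (n + 2)) :
    ∃ w X θ : Fin n → (Fin n → ℝ) → Fin n → ℝ, IsDualFrame U w X ∧
      (∀ m, ContDiffOn ℝ (⊤ : ℕ∞) (w m) U) ∧ (∀ m, ContDiffOn ℝ (⊤ : ℕ∞) (θ m) U) ∧
      ∀ Γ, IsTorsionFreeConn U Γ →
        (((∀ i, TotallyGeodesic U Γ (ωs i)) ∧ ∀ x ∈ U, ∀ p q, dsym Γ (ωs e) p q x = 0) ↔
          ∀ x ∈ U, ∀ m p q, dsym Γ (w m) p q x = symProd (θ m) (w m) p q x) := by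
  obtain ⟨w, X, b, g, h, hwg, he, hlast⟩ := exists_isNormalizedWeb hω hgen e
  refine ⟨w, X, recurrenceForm w X b, h.isDualFrame, h.contDiffOn_form,
    h.contDiffOn_recurrenceForm hU, fun Γ hΓ => ?_⟩
  have hgeo (m : Fin n) : TotallyGeodesic U Γ (w m) ↔
      TotallyGeodesic U Γ (ωs (e.succAbove m.castSucc)) :=
    totallyGeodesic_congr_smul fun x hx => hwg x hx m
  have hgeo_last : TotallyGeodesic U Γ (fun y => ∑ m, b m y • w m y) ↔
      TotallyGeodesic U Γ (ωs (e.succAbove (Fin.last n))) :=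
    totallyGeodesic_congr_smul (g := 1) fun x hx =>
      ⟨one_ne_zero, by rw [hlast hx, Pi.one_apply, one_smul]⟩
  have hgeo_e (hd : ∀ x ∈ U, ∀ p q, dsym Γ (ωs e) p q x = 0) : TotallyGeodesic U Γ (ωs e) :=
    totallyGeodesic_of_dsym_eq_symProd hU (hω e) (θ := 0) continuousOn_const
      fun x hx p q => by simp [hd x hx, symProd]
  rw [← h.adapted_iff hU hΓ, e.forall_iff_succAbove, Fin.forall_fin_succ', hgeo_last,
    forall_congr' hgeo, ← forall_dsym_eq_zero_congr hU he]
  exact ⟨fun ⟨⟨_, hw, hl⟩, hd⟩ => ⟨hw, hl, hd⟩, fun ⟨hw, hl, hd⟩ => ⟨⟨hgeo_e hd, hw, hl⟩, hd⟩⟩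

end NormalizedWeb

theorem statement10_general {n : ℕ} {U : Set (Fin n → ℝ)} (hU : IsOpen U)
    {ωs : Fin (n + 2) → (Fin n → ℝ) → Fin n → ℝ} (hω : ∀ i, ContDiffOn ℝ (⊤ : ℕ∞) (ωs i) U)
    (hgen : ∀ x ∈ U, ∀ σ : Fin n → Fin (n + 2), Function.Injective σ →
      LinearIndependent ℝ fun i => ωs (σ i) x) (e : Fin (n + 2)) :
    ∃ Γ : Fin n → Fin n → Fin n → (Fin n → ℝ) → ℝ,
      (IsTorsionFreeConn U Γ ∧ (∀ i, TotallyGeodesic U Γ (ωs i)) ∧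
        ∀ x ∈ U, ∀ i j, dsym Γ (ωs e) i j x = 0) ∧
      ∀ Γ' : Fin n → Fin n → Fin n → (Fin n → ℝ) → ℝ,
        (IsTorsionFreeConn U Γ' ∧ (∀ i, TotallyGeodesic U Γ' (ωs i)) ∧
          ∀ x ∈ U, ∀ i j, dsym Γ' (ωs e) i j x = 0) →
        ∀ x ∈ U, ∀ k i j, Γ' k i j x = Γ k i j x := by
  obtain ⟨w, X, θ, hX, hw, hθ, hadapted⟩ :=
    exists_isDualFrame_adapted_iff_dsym_eq_symProd hU hω hgen e
  obtain ⟨Γ, hΓ, hΓw⟩ := exists_isTorsionFreeConn_dsym_eq hU hX hw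
    (fun m => contDiffOn_symProd (hθ m) (hw m)) fun m => symProd_swap (θ m) (w m)
  refine ⟨Γ, ⟨hΓ, (hadapted Γ hΓ).2 hΓw⟩, fun Γ' ⟨hΓ', hΓ'w⟩ x hx => ?_⟩
  exact hX.christoffel_eq_of_dsym_eq hx fun m p q =>
    ((hadapted Γ' hΓ').1 hΓ'w x hx m p q).trans (hΓw x hx m p q).symm

/-- a pointed `(n+2)`-web whose `(n+1)`-th form is exact, `ω_{n+1} = df`,
determines a unique torsion-free affine connection for which the web is geodesic and `f`
is affine (`d^s_Γ(df) = 0`). -/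
theorem statement10 {n : ℕ} (hn : 2 ≤ n) (U : Set (Fin n → ℝ)) (hU : IsOpen U)
    (hUconn : IsConnected U)
    (ωs : Fin (n + 2) → (Fin n → ℝ) → Fin n → ℝ) (hweb : IsWeb U ωs)
    (f : (Fin n → ℝ) → ℝ) (hf : ContDiffOn ℝ (⊤ : ℕ∞) f U)
    (hdf : ∀ x ∈ U, fderiv ℝ f x ≠ 0)
    (hexact : ∀ x ∈ U, ∀ k, ωs (⟨n, by omega⟩ : Fin (n + 2)) x k =
      fderiv ℝ f x (Pi.single k 1)) :
    ∃ Γ : Fin n → Fin n → Fin n → (Fin n → ℝ) → ℝ,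
      (IsTorsionFreeConn U Γ ∧ (∀ i, TotallyGeodesic U Γ (ωs i)) ∧
        ∀ x ∈ U, ∀ i j,
          dsym Γ (fun y k => fderiv ℝ f y (Pi.single k 1)) i j x = 0) ∧
      ∀ Γ' : Fin n → Fin n → Fin n → (Fin n → ℝ) → ℝ,
        (IsTorsionFreeConn U Γ' ∧ (∀ i, TotallyGeodesic U Γ' (ωs i)) ∧
          ∀ x ∈ U, ∀ i j,
            dsym Γ' (fun y k => fderiv ℝ f y (Pi.single k 1)) i j x = 0) →
        ∀ x ∈ U, ∀ k i j, Γ' k i j x = Γ k i j x := by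
  have hωf : Set.EqOn (ωs ⟨n, by omega⟩) (fun y k => fderiv ℝ f y (Pi.single k 1)) U :=
    fun x hx => funext (hexact x hx)
  simpa only [forall_dsym_eq_zero_congr hU hωf] using
    statement10_general hU (fun i => (hweb.1 i).1) hweb.2 ⟨n, by omega⟩
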